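/- (Finitary Surface Standardization, CbV) In Λ⊕^cbv, if 𝔪 ⇒* 𝔫 then there exists 𝔯 such that 𝔪 ⇒ₛ* 𝔯 and 𝔯 ⇒_d* 𝔫, where ⇒ₛ is the lifting of surface reduction and ⇒_d that of deep reduction. -/

import Mathlib

open scoped NNReal ENNReal

/-- A (raw) multidistribution on `X`: a finite multiset of weighted elements. -/
abbrev MDist (X : Type) := Multiset (ℝ≥0 × X)

namespace MDist

/-- Scalar multiplication of a multidistribution. -/
def scale {X : Type} (p : ℝ≥0) (m : MDist X) : MDist X :=
  m.map fun q => (p * q.1, q.2)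

/-- The singleton multidistribution `[1 M]`. -/
def single {X : Type} (M : X) : MDist X := {(1, M)}

/-- A multidistribution is proper when every weight lies in `(0,1]` and the
weights sum to at most `1`. -/
def Proper {X : Type} (m : MDist X) : Prop :=
  (∀ q ∈ m, 0 < q.1 ∧ q.1 ≤ 1) ∧ (m.map Prod.fst).sum ≤ 1

/-- The probability that the distribution associated to a multidistribution
assigns to an event `A`. -/
noncomputable def mass {X : Type} (m : MDist X) (A : Set X) : ℝ≥0∞ :=
  (m.map fun q => A.indicator (fun _ => (q.1 : ℝ≥0∞)) q.2).sum

end MDist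

/-- One component of the lifting: either keep the term or perform a step. -/
def LiftTerm {X : Type} (r : X → MDist X → Prop) (M : X) (m : MDist X) : Prop :=
  m = MDist.single M ∨ r M m

/-- The lifting of a relation `r ⊆ X × MDist X` to a binary relation on
multidistributions. -/
inductive Lift {X : Type} (r : X → MDist X → Prop) : MDist X → MDist X → Prop
  | nil : Lift r 0 0
  | cons {p : ℝ≥0} {M : X} {m s t : MDist X} :
      LiftTerm r M m → Lift r s t → Lift r ((p, M) ::ₘ s) (MDist.scale p m + t)
/-- Terms of `Λ⊕` (de Bruijn representation). -/
inductive Term : Type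
  | var : ℕ → Term
  | lam : Term → Term
  | app : Term → Term → Term
  | choice : Term → Term → Term
deriving DecidableEq

namespace Term

/-- Shifting of de Bruijn indices above a cutoff. -/
def liftAux (c : ℕ) : Term → Term
  | var k => if k < c then var k else var (k + 1)
  | lam M => lam (liftAux (c + 1) M)
  | app M N => app (liftAux c M) (liftAux c N)
  | choice M N => choice (liftAux c M) (liftAux c N)

/-- Capture-avoiding substitution `M[N/j]`. -/
def subst : Term → ℕ → Term → Term
  | var k, j, N => if k = j then N else if j < k then var (k - 1) else var k
  | lam M, j, N => lam (subst M (j + 1) (liftAux 0 N))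
  | app M P, j, N => app (subst M j N) (subst P j N)
  | choice M P, j, N => choice (subst M j N) (subst P j N)

/-- Values: variables and abstractions. -/
inductive IsValue : Term → Prop
  | var (n : ℕ) : IsValue (var n)
  | lam (M : Term) : IsValue (lam M)

/-- `β_v`-reduction, closed under arbitrary contexts. -/
inductive BetaStep : Term → Term → Prop
  | beta {M V : Term} : IsValue V → BetaStep (app (lam M) V) (subst M 0 V)
  | appL {M M' N : Term} : BetaStep M M' → BetaStep (app M N) (app M' N)
  | appR {M N N' : Term} : BetaStep N N' → BetaStep (app M N) (app M N')
  | lam {M M' : Term} : BetaStep M M' → BetaStep (lam M) (lam M')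
  | chL {M M' N : Term} : BetaStep M M' → BetaStep (choice M N) (choice M' N)
  | chR {M N N' : Term} : BetaStep N N' → BetaStep (choice M N) (choice M N')

/-- Surface `β_v`-reduction: closure under surface contexts `S ::= □ | MS | SM`. -/
inductive SurfBetaStep : Term → Term → Prop
  | beta {M V : Term} : IsValue V → SurfBetaStep (app (lam M) V) (subst M 0 V)
  | appL {M M' N : Term} : SurfBetaStep M M' → SurfBetaStep (app M N) (app M' N)
  | appR {M N N' : Term} : SurfBetaStep N N' → SurfBetaStep (app M N) (app M N')

/-- `PlusStep M A B` holds when `M = S(P ⊕ Q)`, `A = S(P)`, `B = S(Q)` for a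
surface context `S ::= □ | MS | SM`. -/
inductive PlusStep : Term → Term → Term → Prop
  | choice {M N : Term} : PlusStep (choice M N) M N
  | appL {M A B N : Term} : PlusStep M A B → PlusStep (app M N) (app A N) (app B N)
  | appR {M N A B : Term} : PlusStep N A B → PlusStep (app M N) (app M A) (app M B)

end Term

open Term

/-- The reduction `→_{β_v} ⊆ Λ⊕ × MDST(Λ⊕)`. -/
def betaRed (M : Term) (m : MDist Term) : Prop :=
  ∃ N, BetaStep M N ∧ m = MDist.single N

/-- The probabilistic reduction `→_⊕ ⊆ Λ⊕ × MDST(Λ⊕)`. -/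
def plusRed (M : Term) (m : MDist Term) : Prop :=
  ∃ A B, PlusStep M A B ∧ m = {((1 : ℝ≥0) / 2, A), ((1 : ℝ≥0) / 2, B)}

/-- The full reduction `→ = →_{β_v} ∪ →_⊕`. -/
def red (M : Term) (m : MDist Term) : Prop := betaRed M m ∨ plusRed M m

/-- Surface reduction `→ₛ`: β_v and ⊕ rules closed under surface contexts. -/
def surfRed (M : Term) (m : MDist Term) : Prop :=
  (∃ N, SurfBetaStep M N ∧ m = MDist.single N) ∨ plusRed M m

/-- A step is deep when it is not a surface step. -/
def deepRed (M : Term) (m : MDist Term) : Prop := red M m ∧ ¬ surfRed M m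


/-!
A reduction is standard if it performs surface steps first and then proceeds, again by standard
reductions, inside the immediate subterms of the term reached. A `β_v`-step at the end of a standard
reduction can be absorbed into it, and an `⊕`-step at the end of a standard reduction can be
performed as soon as the surface steps are over, with both results still reducing standardly. So
`𝔪 ⇒* 𝔫` becomes `𝔪 ⇒ₛ* 𝔰`, followed by a standard reduction in each component of `𝔰`.

What remains of such a component after its surface steps takes place under abstractions and
choices, but it need not be deep: the step `(λx.(λy.Q) x) V → (λy.Q) V` has the same source and
target as a surface step. In general such a coincidence contracts `P → P'` in `(λx.P) V`, where
`P[V/x] = (λx.P') V`. Firing the surface redex then replaces the coinciding step by a surface step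
and leaves a strictly cheaper standard reduction, so induction on the number of contracted redexes
removes all coincidences.
-/

theorem reflTransGen_map_of_backward_closed {α β : Type*} {r : α → α → Prop}
    {s : β → β → Prop} {f : α → β} (C : α → Prop) (hC : ∀ x y, r x y → C y → C x)
    (hstep : ∀ x y, C x → r x y → Relation.ReflTransGen s (f x) (f y)) {x y : α}
    (h : Relation.ReflTransGen r x y) (hy : C y) : Relation.ReflTransGen s (f x) (f y) := by
  induction h with
  | refl => exact .refl
  | tail _ hr ih => exact (ih (hC _ _ hr hy)).trans (hstep _ _ (hC _ _ hr hy) hr)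
namespace Term

open Relation (ReflTransGen)

theorem liftAux_succ_liftAux (M : Term) {i c : ℕ} (h : i ≤ c) :
    liftAux (c + 1) (liftAux i M) = liftAux i (liftAux c M) := by
  induction M generalizing i c <;> grind [liftAux]

theorem liftAux_subst_of_ge (M N : Term) {j c : ℕ} (h : j ≤ c) :
    liftAux c (subst M j N) = subst (liftAux (c + 1) M) j (liftAux c N) := by
  induction M generalizing j c N <;> grind [liftAux, subst, liftAux_succ_liftAux]

theorem liftAux_subst_of_le (M N : Term) {i j : ℕ} (h : i ≤ j) :
    liftAux i (subst M j N) = subst (liftAux i M) (j + 1) (liftAux i N) := by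
  induction M generalizing i j N <;> grind [liftAux, subst, liftAux_succ_liftAux]

theorem subst_liftAux (M N : Term) (i : ℕ) : subst (liftAux i M) i N = M := by
  induction M generalizing i N <;> grind [liftAux, subst]

theorem subst_subst (M N V : Term) {i j : ℕ} (h : i ≤ j) :
    subst (subst M i N) j V = subst (subst M (j + 1) (liftAux i V)) i (subst N j V) := by
  induction M generalizing i j N V <;>
    grind [subst, subst_liftAux, liftAux_succ_liftAux, liftAux_subst_of_le]

theorem IsValue.liftAux {V : Term} (hV : IsValue V) (c : ℕ) : IsValue (liftAux c V) := by
  cases hV with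
  | var n => simp only [Term.liftAux]; split_ifs <;> constructor
  | lam M => exact .lam _

theorem IsValue.subst {V W : Term} (hV : IsValue V) (hW : IsValue W) (j : ℕ) :
    IsValue (subst V j W) := by
  cases hV with
  | var n => simp only [Term.subst]; split_ifs <;> first | assumption | constructor
  | lam M => exact .lam _

theorem SurfBetaStep.betaStep {M N : Term} (h : SurfBetaStep M N) : BetaStep M N := by
  induction h with
  | beta hV => exact .beta hV
  | appL _ ih => exact .appL ih
  | appR _ ih => exact .appR ih

theorem SurfBetaStep.liftAux {M N : Term} (h : SurfBetaStep M N) (c : ℕ) :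
    SurfBetaStep (liftAux c M) (liftAux c N) := by
  induction h with
  | beta hV =>
    rw [liftAux_subst_of_ge _ _ c.zero_le]
    exact .beta (hV.liftAux c)
  | appL _ ih => exact .appL ih
  | appR _ ih => exact .appR ih

theorem SurfBetaStep.subst {M N V : Term} (h : SurfBetaStep M N) (hV : IsValue V) (j : ℕ) :
    SurfBetaStep (subst M j V) (subst N j V) := by
  induction h with
  | beta hW =>
    rw [subst_subst _ _ _ j.zero_le]
    exact .beta (hW.subst hV j)
  | appL _ ih => exact .appL ih
  | appR _ ih => exact .appR ih

theorem surfBetaStep_app_star {M M' N N' : Term} (hM : ReflTransGen SurfBetaStep M M')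
    (hN : ReflTransGen SurfBetaStep N N') :
    ReflTransGen SurfBetaStep (app M N) (app M' N') :=
  (hM.lift (app · N) fun _ _ h => .appL h).trans (hN.lift (app M') fun _ _ h => .appR h)

/-- `Standard n M N`: there is a standard `β_v`-reduction from `M` to `N` contracting `n` redexes.
A standard reduction performs surface steps first and then proceeds, again by standard reductions,
inside the immediate subterms of the term reached. -/
inductive Standard : ℕ → Term → Term → Prop
  | var (x : ℕ) : Standard 0 (var x) (var x)
  | lam {n : ℕ} {P P' : Term} : Standard n P P' → Standard n (lam P) (lam P')
  | app {a b : ℕ} {M M' N N' : Term} :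
      Standard a M M' → Standard b N N' → Standard (a + b) (app M N) (app M' N')
  | choice {a b : ℕ} {M M' N N' : Term} :
      Standard a M M' → Standard b N N' → Standard (a + b) (choice M N) (choice M' N')
  | surf {n : ℕ} {M M' N : Term} :
      SurfBetaStep M M' → Standard n M' N → Standard (n + 1) M N

/-- `M` has a standard reduction to `N`, of any cost. -/
def StandardReduces (M N : Term) : Prop := ∃ n, Standard n M N

/-- `Internal n M N`: a standard reduction from `M` to `N` contracting `n` redexes, all of them
under an abstraction or a choice. -/
inductive Internal : ℕ → Term → Term → Prop
  | var (x : ℕ) : Internal 0 (var x) (var x)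
  | lam {n : ℕ} {P P' : Term} : Standard n P P' → Internal n (lam P) (lam P')
  | app {a b : ℕ} {M M' N N' : Term} :
      Internal a M M' → Internal b N N' → Internal (a + b) (app M N) (app M' N')
  | choice {a b : ℕ} {M M' N N' : Term} :
      Standard a M M' → Standard b N N' → Internal (a + b) (choice M N) (choice M' N')

theorem Internal.standard {n : ℕ} {M N : Term} (h : Internal n M N) : Standard n M N := by
  induction h with
  | var x => exact .var x
  | lam h => exact .lam h
  | app _ _ ihM ihN => exact .app ihM ihN
  | choice hM hN => exact .choice hM hN

theorem Internal.isValue {n : ℕ} {M V : Term} (h : Internal n M V) (hV : IsValue V) :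
    IsValue M := by
  cases hV <;> cases h <;> constructor

theorem Standard.refl (M : Term) : Standard 0 M M := by
  induction M with
  | var x => exact .var x
  | lam _ ih => exact .lam ih
  | app _ _ ihM ihN => exact .app ihM ihN
  | choice _ _ ihM ihN => exact .choice ihM ihN

theorem Standard.internal_or_surf {n : ℕ} {M N : Term} (h : Standard n M N) :
    Internal n M N ∨ ∃ k M', n = k + 1 ∧ SurfBetaStep M M' ∧ Standard k M' N := by
  induction h with
  | var x => exact .inl (.var x)
  | lam h => exact .inl (.lam h)
  | choice hM hN => exact .inl (.choice hM hN)
  | surf hs h => exact .inr ⟨_, _, rfl, hs, h⟩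
  | @app a b M M' N N' hM hN ihM ihN =>
    rcases ihM with hM' | ⟨k, M₁, rfl, hs, hM₁⟩
    · rcases ihN with hN' | ⟨k, N₁, rfl, hs, hN₁⟩
      · exact .inl (.app hM' hN')
      · exact .inr ⟨a + k, _, rfl, .appR hs, .app hM hN₁⟩
    · exact .inr ⟨k + b, _, by omega, .appL hs, .app hM₁ hN⟩

theorem Standard.exists_internal {n : ℕ} {M N : Term} (h : Standard n M N) :
    ∃ k ≤ n, ∃ R, ReflTransGen SurfBetaStep M R ∧ Internal k R N := by
  induction n generalizing M with
  | zero =>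
    rcases h.internal_or_surf with h | ⟨k, M', hk, -⟩
    · exact ⟨0, le_rfl, M, .refl, h⟩
    · omega
  | succ n ih =>
    rcases h.internal_or_surf with h | ⟨k, M', hk, hs, h⟩
    · exact ⟨n + 1, le_rfl, M, .refl, h⟩
    · obtain rfl : n = k := by omega
      obtain ⟨c, hc, R, hR, hRN⟩ := ih h
      exact ⟨c, by omega, R, .head hs hR, hRN⟩

theorem Standard.of_surf_star {n : ℕ} {M R N : Term} (hMR : ReflTransGen SurfBetaStep M R)
    (h : Standard n R N) : StandardReduces M N := by
  induction hMR using ReflTransGen.head_induction_on with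
  | refl => exact ⟨n, h⟩
  | head hs _ ih =>
    obtain ⟨k, hk⟩ := ih
    exact ⟨k + 1, .surf hs hk⟩

theorem Standard.betaStep_star {n : ℕ} {M N : Term} (h : Standard n M N) :
    ReflTransGen BetaStep M N := by
  induction h with
  | var x => exact .refl
  | lam _ ih => exact ih.lift Term.lam fun _ _ h => .lam h
  | @app _ _ _ M' N _ _ _ ihM ihN =>
    exact (ihM.lift (Term.app · N) fun _ _ h => .appL h).trans
      (ihN.lift (Term.app M') fun _ _ h => .appR h)
  | @choice _ _ _ M' N _ _ _ ihM ihN =>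
    exact (ihM.lift (Term.choice · N) fun _ _ h => .chL h).trans
      (ihN.lift (Term.choice M') fun _ _ h => .chR h)
  | surf hs _ ih => exact .head hs.betaStep ih

theorem Standard.liftAux {n : ℕ} {M N : Term} (h : Standard n M N) (c : ℕ) :
    Standard n (liftAux c M) (liftAux c N) := by
  induction h generalizing c with
  | var x => exact .refl _
  | lam _ ih => exact .lam (ih (c + 1))
  | app _ _ ihM ihN => exact .app (ihM c) (ihN c)
  | choice _ _ ihM ihN => exact .choice (ihM c) (ihN c)
  | surf hs _ ih => exact .surf (hs.liftAux c) (ih c)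

theorem Standard.subst {n m : ℕ} {M N V V' : Term} (h : Standard n M N) (hV : IsValue V)
    (hVV' : Standard m V V') (j : ℕ) : StandardReduces (subst M j V) (subst N j V') := by
  induction h generalizing j V V' with
  | var x =>
    simp only [Term.subst]
    split_ifs
    · exact ⟨m, hVV'⟩
    · exact ⟨0, .refl _⟩
    · exact ⟨0, .refl _⟩
  | lam _ ih =>
    obtain ⟨k, hk⟩ := ih (hV.liftAux 0) (hVV'.liftAux 0) (j + 1)
    exact ⟨k, .lam hk⟩
  | app _ _ ihM ihN =>
    obtain ⟨a, ha⟩ := ihM hV hVV' j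
    obtain ⟨b, hb⟩ := ihN hV hVV' j
    exact ⟨a + b, .app ha hb⟩
  | choice _ _ ihM ihN =>
    obtain ⟨a, ha⟩ := ihM hV hVV' j
    obtain ⟨b, hb⟩ := ihN hV hVV' j
    exact ⟨a + b, .choice ha hb⟩
  | surf hs _ ih =>
    obtain ⟨k, hk⟩ := ih hV hVV' j
    exact ⟨k + 1, .surf (hs.subst hV j) hk⟩

theorem Standard.app_lam_beta {a b : ℕ} {M N P V : Term} (hM : Standard a M (Term.lam P))
    (hN : Standard b N V) (hV : IsValue V) :
    StandardReduces (Term.app M N) (Term.subst P 0 V) := by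
  obtain ⟨_, -, _, hMQ, hQ⟩ := hM.exists_internal
  obtain ⟨_, -, W, hNW, hW⟩ := hN.exists_internal
  cases hQ with
  | lam hQ =>
    have hWval : IsValue W := hW.isValue hV
    obtain ⟨k, hk⟩ := hQ.subst hWval hW.standard 0
    exact Standard.of_surf_star (.tail (surfBetaStep_app_star hMQ hNW) (.beta hWval)) hk

theorem Standard.tail_betaStep {n : ℕ} {M N N' : Term} (h : Standard n M N)
    (hN : BetaStep N N') : StandardReduces M N' := by
  induction h generalizing N' with
  | var x => cases hN
  | lam _ ih =>
    cases hN with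
    | lam hP => obtain ⟨k, hk⟩ := ih hP; exact ⟨k, .lam hk⟩
  | app hM hN' ihM ihN =>
    cases hN with
    | beta hV => exact hM.app_lam_beta hN' hV
    | appL hs => obtain ⟨k, hk⟩ := ihM hs; exact ⟨_, .app hk hN'⟩
    | appR hs => obtain ⟨k, hk⟩ := ihN hs; exact ⟨_, .app hM hk⟩
  | choice hM hN' ihM ihN =>
    cases hN with
    | chL hs => obtain ⟨k, hk⟩ := ihM hs; exact ⟨_, .choice hk hN'⟩
    | chR hs => obtain ⟨k, hk⟩ := ihN hs; exact ⟨_, .choice hM hk⟩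
  | surf hs _ ih => obtain ⟨k, hk⟩ := ih hN; exact ⟨k + 1, .surf hs hk⟩

theorem Internal.plusStep {n : ℕ} {M N A B : Term} (h : Internal n M N) (hN : PlusStep N A B) :
    ∃ A₀ B₀, PlusStep M A₀ B₀ ∧ StandardReduces A₀ A ∧ StandardReduces B₀ B := by
  induction hN generalizing n M with
  | choice => cases h with
    | choice hA hB => exact ⟨_, _, .choice, ⟨_, hA⟩, _, hB⟩
  | appL _ ih => cases h with
    | app hM hN =>
      obtain ⟨_, _, hs, ⟨_, hA⟩, _, hB⟩ := ih hM
      exact ⟨_, _, .appL hs, ⟨_, .app hA hN.standard⟩, _, .app hB hN.standard⟩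
  | appR _ ih => cases h with
    | app hM hN =>
      obtain ⟨_, _, hs, ⟨_, hA⟩, _, hB⟩ := ih hN
      exact ⟨_, _, .appR hs, ⟨_, .app hM.standard hA⟩, _, .app hM.standard hB⟩

theorem subst_eq_var {M V : Term} {j i : ℕ} (h : subst M j V = var i) : ∃ k, M = var k := by
  cases M with
  | var k => exact ⟨k, rfl⟩
  | _ => simp [subst] at h

theorem subst_eq_lam {M V Q : Term} {j : ℕ} (h : subst M j V = lam Q) :
    (M = var j ∧ V = lam Q) ∨ ∃ P, M = lam P ∧ subst P (j + 1) (liftAux 0 V) = Q := by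
  cases M with
  | var k => grind [subst]
  | lam P => exact .inr ⟨P, rfl, by simpa only [subst, lam.injEq] using h⟩
  | _ => simp [subst] at h

theorem subst_eq_app {M V Q R : Term} {j : ℕ} (hV : IsValue V) (h : subst M j V = app Q R) :
    ∃ M₁ M₂, M = app M₁ M₂ ∧ subst M₁ j V = Q ∧ subst M₂ j V = R := by
  cases M with
  | app M N => exact ⟨M, N, rfl, by simpa only [subst, app.injEq] using h⟩
  | var k => cases hV <;> grind [subst]
  | _ => simp [subst] at h

theorem BetaStep.exists_eq_lam {Q Y : Term} (h : BetaStep (Term.lam Q) Y) :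
    ∃ Q', Y = Term.lam Q' := by
  cases h with
  | lam _ => exact ⟨_, rfl⟩

-- Such an equation would reproduce itself, with `X` replaced by a proper subterm.
theorem BetaStep.subst_ne_lam_app_var {X X' V : Term} (h : BetaStep X X') (hV : IsValue V)
    (i j : ℕ) : subst X j V ≠ Term.lam (app (var i) X') := by
  intro heq
  rcases subst_eq_lam heq with ⟨rfl, -⟩ | ⟨P, rfl, hP⟩
  · cases h
  obtain ⟨Z, Y, rfl, hZ, hY⟩ := subst_eq_app (hV.liftAux 0) hP
  obtain ⟨k, rfl⟩ := subst_eq_var hZ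
  cases h with
  | lam h => cases h with
    | appL h => cases h
    | appR h => exact h.subst_ne_lam_app_var (hV.liftAux 0) _ _ hY
termination_by sizeOf X

/-- `Frame j W v`: below `j` binders inside the body of `λP` in a redex `(λP) V`, firing that redex
substitutes `W`, the value `V` shifted `j` times, for the index `j`. At depth `0` the term `v` is
the argument `V` itself; at positive depth `v` is arbitrary. -/
inductive Frame : ℕ → Term → Term → Prop
  | zero {V : Term} : IsValue V → Frame 0 V V
  | succ {j : ℕ} {W v : Term} (v' : Term) : Frame j W v → Frame (j + 1) (liftAux 0 W) v'

theorem Frame.isValue {j : ℕ} {W v : Term} (h : Frame j W v) : IsValue W := by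
  induction h with
  | zero hV => exact hV
  | succ _ _ ih => exact ih.liftAux 0

theorem liftAux_zero_eq_lam_app_var_succ {W Q : Term} {i : ℕ}
    (h : liftAux 0 W = lam (app (var (i + 1)) Q)) :
    i ≠ 0 ∧ ∃ Q', W = lam (app (var i) Q') := by
  rcases W with _ | (_ | _ | _ | _) | _ | _
  case lam.app M _ => cases M <;> grind [liftAux]
  all_goals grind [liftAux]

-- `W` is a term shifted `j + 1` times, so no index below `j + 1` is free in it.
theorem Frame.ne_lam_app_var {j : ℕ} {W v Q : Term} (h : Frame (j + 1) W v) :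
    W ≠ lam (app (var (j + 1)) Q) := by
  induction j generalizing W v Q with
  | zero => cases h with
    | succ _ _ => exact fun heq => (liftAux_zero_eq_lam_app_var_succ heq).1 rfl
  | succ j ih => cases h with
    | succ _ h =>
      intro heq
      obtain ⟨-, _, hW⟩ := liftAux_zero_eq_lam_app_var_succ heq
      exact ih h hW

theorem Frame.subst_ne_app_lam_self {j : ℕ} {Q W v R : Term} (h : Frame (j + 1) W v) :
    subst Q (j + 1) W ≠ app (lam Q) R := by
  intro heq
  obtain ⟨Q₁, Q₂, rfl, h₁, -⟩ := subst_eq_app h.isValue heq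
  rcases subst_eq_lam h₁ with ⟨rfl, hW⟩ | ⟨Q₃, rfl, hQ₃⟩
  · exact h.ne_lam_app_var hW
  · exact (h.succ v).subst_ne_app_lam_self hQ₃
termination_by sizeOf Q

/-- A `β_v`-step `X → Y` below `j` binders in the body of a redex that does not coincide with
firing that redex. At depth `0` and with `v = W` this says that `(λX) v → (λY) v` is not also the
surface step `(λX) v → X[v]`. -/
def Avoids (j : ℕ) (W v X Y : Term) : Prop :=
  BetaStep X Y ∧ subst X j W ≠ app (lam Y) v

/-- Either `P` reduces to `A` by steps avoiding coincidences in the frame `(j, W, v)`, or firing the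
enclosing redex first makes a standard reduction of cost `n` to `A` strictly cheaper. -/
def AvoidsOrShortens (n : ℕ) (P A : Term) (j : ℕ) (W v : Term) : Prop :=
  ReflTransGen (Avoids j W v) P A ∨
    ∃ m < n, ∀ k v', Internal k v v' → Standard (m + k) (subst P j W) (app (lam A) v')

theorem Avoids.app_right {M N N' W v : Term} {j : ℕ} (h : BetaStep N N') (hW : Frame j W v) :
    Avoids j W v (app M N) (app M N') := by
  refine ⟨.appR h, fun heq => ?_⟩
  obtain ⟨hM, hN⟩ : subst M j W = lam (app M N') ∧ subst N j W = v := by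
    simpa only [subst, app.injEq] using heq
  rcases subst_eq_lam hM with ⟨rfl, hWeq⟩ | ⟨Q, rfl, hQ⟩
  · cases hW with
    | zero hV => exact h.subst_ne_lam_app_var hV _ _ (hN.trans hWeq)
    | succ _ hW => exact (hW.succ v).ne_lam_app_var hWeq
  · exact (hW.succ v).subst_ne_app_lam_self hQ

theorem Avoids.app_left {M M' N W v : Term} {j : ℕ} (h : BetaStep M M')
    (hM : ∀ Q, M ≠ lam Q) : Avoids j W v (app M N) (app M' N) := by
  refine ⟨.appL h, fun heq => ?_⟩
  have hMW : subst M j W = lam (app M' N) := by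
    simp only [subst, app.injEq] at heq
    exact heq.1
  rcases subst_eq_lam hMW with ⟨rfl, -⟩ | ⟨Q, rfl, -⟩
  · cases h
  · exact hM Q rfl

theorem Internal.avoids_star_app_right {n j : ℕ} {M N N' W v : Term} (h : Internal n N N')
    (hW : Frame j W v) : ReflTransGen (Avoids j W v) (Term.app M N) (Term.app M N') :=
  h.standard.betaStep_star.lift (Term.app M) fun _ _ h => .app_right h hW

theorem AvoidsOrShortens.app_lam {a b j : ℕ} {Q Q' N N' W v : Term}
    (h : AvoidsOrShortens a Q Q' (j + 1) (liftAux 0 W) N) (hQ : Standard a Q Q')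
    (hN : Internal b N N') (hW : Frame j W v) :
    AvoidsOrShortens (a + b) (app (lam Q) N) (app (lam Q') N') j W v := by
  by_cases hv : subst N j W = v
  · rcases h with h | ⟨m, hm, hstd⟩
    · refine .inl (.trans (h.lift (fun X => app (lam X) N) fun X Y hXY =>
        ⟨.appL (.lam hXY.1), fun heq => hXY.2 ?_⟩) (hN.avoids_star_app_right hW))
      simp only [subst, app.injEq, lam.injEq] at heq
      exact heq.1
    · refine .inr ⟨m + b, by omega, fun k v' hv' => ?_⟩
      simp only [subst, hv]
      exact .app (.lam (hstd b N' hN)) hv'.standard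
  · refine .inl (.trans (hQ.betaStep_star.lift (fun X => app (lam X) N) fun X Y hXY =>
      ⟨.appL (.lam hXY), fun heq => hv ?_⟩) (hN.avoids_star_app_right hW))
    simp only [subst, app.injEq] at heq
    exact heq.2

theorem Internal.app_avoidsOrShortens {a b j : ℕ} {M M' N N' W v : Term} (hM : Internal a M M')
    (hN : Internal b N N') (hW : Frame j W v)
    (ih : ∀ Q Q', M' = Term.lam Q' → Standard a Q Q' →
      AvoidsOrShortens a Q Q' (j + 1) (Term.liftAux 0 W) N) :
    AvoidsOrShortens (a + b) (Term.app M N) (Term.app M' N') j W v := by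
  by_cases hlam : ∃ Q', M' = Term.lam Q'
  · obtain ⟨Q', rfl⟩ := hlam
    cases hM with
    | lam hQ => exact (ih _ _ rfl hQ).app_lam hQ hN hW
  · refine .inl (.trans ?_ (hN.avoids_star_app_right hW))
    refine reflTransGen_map_of_backward_closed (f := (Term.app · N)) (fun X => ∀ Q, X ≠ Term.lam Q)
      ?_ (fun X Y hX h => .single (.app_left h hX)) hM.standard.betaStep_star
      (fun Q h => hlam ⟨Q, h⟩)
    rintro _ Y h hY Q rfl
    obtain ⟨Q', rfl⟩ := h.exists_eq_lam
    exact hY Q' rfl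

theorem Standard.avoidsOrShortens {n j : ℕ} {P A W v : Term} (h : Standard n P A)
    (hW : Frame j W v) : AvoidsOrShortens n P A j W v := by
  rcases h.internal_or_surf with h | ⟨n, P', rfl, hs, hP'⟩
  · cases h with
    | var x => exact .inl .refl
    | lam hP =>
      exact .inl (hP.betaStep_star.lift Term.lam fun _ _ h => ⟨.lam h, nofun⟩)
    | @choice _ _ _ M' N _ hM hN =>
      exact .inl ((hM.betaStep_star.lift (Term.choice · N) fun _ _ h => ⟨.chL h, nofun⟩).trans
        (hN.betaStep_star.lift (Term.choice M') fun _ _ h => ⟨.chR h, nofun⟩))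
    | @app _ _ _ _ N _ hM hN =>
      refine hM.app_avoidsOrShortens hN hW ?_
      rintro Q Q' rfl hQ
      exact hQ.avoidsOrShortens (hW.succ N)
  · by_cases hfire : Term.subst P j W = Term.app (Term.lam P') v
    · exact .inr ⟨n, by omega, fun k v' hv' => hfire ▸ .app (.lam hP') hv'.standard⟩
    · rcases hP'.avoidsOrShortens hW with h | ⟨m, hm, hstd⟩
      · exact .inl (.head ⟨hs.betaStep, hfire⟩ h)
      · refine .inr ⟨m + 1, by omega, fun k v' hv' => ?_⟩
        rw [Nat.add_right_comm]
        exact .surf (hs.subst hW.isValue j) (hstd k v' hv')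
termination_by (sizeOf A, n)

/-- A `β_v`-step that is not also a surface step with the same target. -/
def DeepBetaStep (X Y : Term) : Prop := BetaStep X Y ∧ ¬ SurfBetaStep X Y

theorem BetaStep.deepBetaStep_star {X Y : Term} (h : BetaStep X Y)
    (hXY : SurfBetaStep X Y → X = Y) : ReflTransGen DeepBetaStep X Y := by
  by_cases hs : SurfBetaStep X Y
  · rw [hXY hs]
  · exact .single ⟨h, hs⟩

theorem surfBetaStep_app_iff {X Y Z : Term} : SurfBetaStep (app X Y) Z ↔
    (∃ P, X = lam P ∧ IsValue Y ∧ subst P 0 Y = Z) ∨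
    (∃ X', SurfBetaStep X X' ∧ app X' Y = Z) ∨ ∃ Y', SurfBetaStep Y Y' ∧ app X Y' = Z := by
  constructor
  · intro h
    cases h with
    | beta hV => exact .inl ⟨_, rfl, hV, rfl⟩
    | appL h => exact .inr (.inl ⟨_, h, rfl⟩)
    | appR h => exact .inr (.inr ⟨_, h, rfl⟩)
  · rintro (⟨P, rfl, hV, rfl⟩ | ⟨X', h, rfl⟩ | ⟨Y', h, rfl⟩)
    exacts [.beta hV, .appL h, .appR h]

theorem IsValue.not_surfBetaStep {V X : Term} (hV : IsValue V) : ¬ SurfBetaStep V X := by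
  cases hV <;> exact nofun

theorem BetaStep.subst_ne_app_lam {P V V' : Term} (h : BetaStep V V') (hV : IsValue V) :
    Term.subst P 0 V ≠ Term.app (Term.lam P) V' := by
  intro heq
  obtain ⟨P₁, P₂, rfl, h₁, h₂⟩ := subst_eq_app hV heq
  rcases subst_eq_lam h₁ with ⟨rfl, rfl⟩ | ⟨Q, rfl, hQ⟩
  · cases h with
    | lam h => cases h with
      | appL h => cases h
      | appR h => exact h.subst_ne_lam_app_var hV _ _ h₂
  · exact ((Frame.zero hV).succ V).subst_ne_app_lam_self hQ

theorem DeepBetaStep.app_right {M Y Y' : Term} (h : DeepBetaStep Y Y') :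
    ReflTransGen DeepBetaStep (app M Y) (app M Y') := by
  refine BetaStep.deepBetaStep_star (.appR h.1) fun hs => ?_
  rcases surfBetaStep_app_iff.1 hs with ⟨P, rfl, hV, heq⟩ | ⟨M', -, heq⟩ | ⟨Y₁, hY, heq⟩
  · exact (h.1.subst_ne_app_lam hV heq).elim
  · rw [(app.inj heq).2]
  · exact (h.2 ((app.inj heq).2 ▸ hY)).elim

theorem DeepBetaStep.app_left {X X' N : Term} (h : DeepBetaStep X X')
    (hX : ¬ ((∃ Q, X = lam Q) ∧ IsValue N)) :
    ReflTransGen DeepBetaStep (app X N) (app X' N) := by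
  refine BetaStep.deepBetaStep_star (.appL h.1) fun hs => ?_
  rcases surfBetaStep_app_iff.1 hs with ⟨P, hP, hV, -⟩ | ⟨X₁, hX₁, heq⟩ | ⟨N', -, heq⟩
  · exact (hX ⟨⟨P, hP⟩, hV⟩).elim
  · exact (h.2 ((app.inj heq).1 ▸ hX₁)).elim
  · rw [(app.inj heq).1]

theorem Avoids.deepBetaStep_app_lam {P P' V : Term} (hV : IsValue V)
    (h : Avoids 0 V V P P') : DeepBetaStep (app (lam P) V) (app (lam P') V) := by
  refine ⟨.appL (.lam h.1), fun hs => ?_⟩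
  rcases surfBetaStep_app_iff.1 hs with ⟨_, hP, -, heq⟩ | ⟨_, hs, -⟩ | ⟨_, hs, -⟩
  · cases hP; exact h.2 heq
  · exact (IsValue.lam P).not_surfBetaStep hs
  · exact hV.not_surfBetaStep hs

theorem Internal.app_deepBetaStep_star_or_shortens {a b : ℕ} {M M' N N' : Term}
    (hM : Internal a M M') (hN : Internal b N N') (hMM' : ReflTransGen DeepBetaStep M M')
    (hNN' : ReflTransGen DeepBetaStep N N') :
    ReflTransGen DeepBetaStep (Term.app M N) (Term.app M' N') ∨
      ∃ c < a + b, ∃ R, ReflTransGen SurfBetaStep (Term.app M N) R ∧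
        Internal c R (Term.app M' N') := by
  have right : ReflTransGen DeepBetaStep (Term.app M' N) (Term.app M' N') :=
    hNN'.lift' (Term.app M') fun _ _ h => h.app_right
  by_cases hredex : (∃ Q', M' = Term.lam Q') ∧ IsValue N
  · obtain ⟨⟨Q', rfl⟩, hV⟩ := hredex
    cases hM with
    | lam hQ =>
      rcases hQ.avoidsOrShortens (.zero hV) with h | ⟨m, hm, hstd⟩
      · exact .inl ((h.lift (fun X => Term.app (Term.lam X) N) fun _ _ h =>
          h.deepBetaStep_app_lam hV).trans right)
      · obtain ⟨c, hc, R, hR, hRN⟩ := (hstd b N' hN).exists_internal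
        exact .inr ⟨c, by omega, R, .head (.beta hV) hR, hRN⟩
  · refine .inl (.trans ?_ right)
    refine reflTransGen_map_of_backward_closed (f := (Term.app · N))
      (fun X => ¬ ((∃ Q, X = Term.lam Q) ∧ IsValue N)) ?_ (fun X Y hX h => h.app_left hX)
      hMM' hredex
    rintro _ Y h hY ⟨⟨Q, rfl⟩, hV⟩
    exact hY ⟨h.1.exists_eq_lam, hV⟩

theorem Internal.deepBetaStep_star_or_shortens {n : ℕ} {R N : Term} (h : Internal n R N) :
    ReflTransGen DeepBetaStep R N ∨
      ∃ c < n, ∃ R', ReflTransGen SurfBetaStep R R' ∧ Internal c R' N := by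
  induction h with
  | var x => exact .inl .refl
  | lam h => exact .inl (h.betaStep_star.lift Term.lam fun _ _ h => ⟨.lam h, nofun⟩)
  | @choice _ _ _ M' N _ hM hN =>
    exact .inl ((hM.betaStep_star.lift (Term.choice · N) fun _ _ h => ⟨.chL h, nofun⟩).trans
      (hN.betaStep_star.lift (Term.choice M') fun _ _ h => ⟨.chR h, nofun⟩))
  | app hM hN ihM ihN =>
    rcases ihM with hMM' | ⟨c, hc, R, hMR, hR⟩
    · rcases ihN with hNN' | ⟨c, hc, R, hNR, hR⟩
      · exact hM.app_deepBetaStep_star_or_shortens hN hMM' hNN'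
      · exact .inr ⟨_, by omega, _, surfBetaStep_app_star .refl hNR, .app hM hR⟩
    · exact .inr ⟨_, by omega, _, surfBetaStep_app_star hMR .refl, .app hR hN⟩

theorem Internal.exists_deepBetaStep_star {n : ℕ} {R N : Term} (h : Internal n R N) :
    ∃ R', ReflTransGen SurfBetaStep R R' ∧ ReflTransGen DeepBetaStep R' N := by
  induction n using Nat.strong_induction_on generalizing R with
  | _ n ih =>
    rcases h.deepBetaStep_star_or_shortens with h | ⟨c, hc, R₁, hRR₁, h⟩
    · exact ⟨R, .refl, h⟩
    · obtain ⟨R', hR', hR'N⟩ := ih c hc h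
      exact ⟨R', hRR₁.trans hR', hR'N⟩

theorem Standard.exists_deepBetaStep_star {n : ℕ} {M N : Term} (h : Standard n M N) :
    ∃ R, ReflTransGen SurfBetaStep M R ∧ ReflTransGen DeepBetaStep R N := by
  obtain ⟨_, -, R₀, hMR₀, hR₀N⟩ := h.exists_internal
  obtain ⟨R, hR₀R, hRN⟩ := hR₀N.exists_deepBetaStep_star
  exact ⟨R, hMR₀.trans hR₀R, hRN⟩

theorem DeepBetaStep.deepRed {X Y : Term} (h : DeepBetaStep X Y) :
    deepRed X (MDist.single Y) := by
  refine ⟨.inl ⟨Y, h.1, rfl⟩, ?_⟩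
  rintro (⟨Z, hXZ, heq⟩ | ⟨A, B, -, heq⟩)
  · simp only [MDist.single, Multiset.singleton_inj, Prod.mk.injEq, true_and] at heq
    exact h.2 (heq ▸ hXZ)
  · simpa [MDist.single] using congrArg Multiset.card heq

end Term

section Lifting

open Relation (ReflTransGen)

variable {X : Type}

namespace MDist

theorem scale_single (p : ℝ≥0) (M : X) : scale p (single M) = {(p, M)} := by
  simp only [scale, single, Multiset.map_singleton, mul_one]

theorem scale_pair (p a b : ℝ≥0) (M N : X) :
    scale p {(a, M), (b, N)} = {(p * a, M)} + {(p * b, N)} := by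
  simp only [scale, Multiset.insert_eq_cons, Multiset.map_cons, Multiset.map_singleton,
    Multiset.singleton_add]

/-- The componentwise extension of a relation on `X` to multidistributions: the components are
matched with equal weights and related elements. -/
def Rel (S : X → X → Prop) (m n : MDist X) : Prop :=
  Multiset.Rel (fun x y => x.1 = y.1 ∧ S x.2 y.2) m n

theorem Rel.refl {S : X → X → Prop} (hS : ∀ M, S M M) (m : MDist X) : Rel S m m :=
  Multiset.rel_refl_of_refl_on fun x _ => ⟨rfl, hS x.2⟩

theorem Rel.singleton {S : X → X → Prop} {M N : X} (h : S M N) (p : ℝ≥0) :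
    Rel S {(p, M)} {(p, N)} :=
  .cons ⟨rfl, h⟩ .zero

theorem Rel.add {S : X → X → Prop} {m₁ m₂ n₁ n₂ : MDist X} (h₁ : Rel S m₁ n₁)
    (h₂ : Rel S m₂ n₂) : Rel S (m₁ + m₂) (n₁ + n₂) :=
  Multiset.Rel.add h₁ h₂

theorem rel_cons_right {S : X → X → Prop} {p : ℝ≥0} {N : X} {s n : MDist X} :
    Rel S s ((p, N) ::ₘ n) ↔ ∃ M s', S M N ∧ Rel S s' n ∧ s = {(p, M)} + s' := by
  simp only [Rel, Multiset.rel_cons_right, Multiset.singleton_add, Prod.exists]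
  constructor
  · rintro ⟨_, M, s', ⟨rfl, hM⟩, hs', rfl⟩
    exact ⟨M, s', hM, hs', rfl⟩
  · rintro ⟨M, s', hM, hs', rfl⟩
    exact ⟨p, M, s', ⟨rfl, hM⟩, hs', rfl⟩

end MDist

variable {r t : X → MDist X → Prop}

namespace Lift

theorem refl (m : MDist X) : Lift r m m := by
  induction m using Multiset.induction_on with
  | empty => exact .nil
  | cons q m ih =>
    simpa only [MDist.scale_single, Multiset.singleton_add] using
      Lift.cons (p := q.1) (M := q.2) (.inl rfl) ih

theorem add {m₁ m₂ n₁ n₂ : MDist X} (h₁ : Lift r m₁ n₁) (h₂ : Lift r m₂ n₂) :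
    Lift r (m₁ + m₂) (n₁ + n₂) := by
  induction h₁ with
  | nil => simpa only [zero_add] using h₂
  | cons h _ ih =>
    rw [Multiset.cons_add, add_assoc]
    exact .cons h ih

theorem of_step {M : X} {m : MDist X} (h : r M m) (p : ℝ≥0) :
    Lift r {(p, M)} (MDist.scale p m) := by
  simpa only [Multiset.cons_zero, add_zero] using Lift.cons (p := p) (.inr h) .nil

theorem star_add {m₁ m₂ n₁ n₂ : MDist X} (h₁ : ReflTransGen (Lift r) m₁ n₁)
    (h₂ : ReflTransGen (Lift r) m₂ n₂) : ReflTransGen (Lift r) (m₁ + m₂) (n₁ + n₂) :=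
  (h₁.lift (· + m₂) fun _ _ h => h.add (refl m₂)).trans
    (h₂.lift (n₁ + ·) fun _ _ h => (refl n₁).add h)

theorem star_of_path {s : X → X → Prop} (hs : ∀ M N, s M N → r M (MDist.single N)) {M N : X}
    (h : ReflTransGen s M N) (p : ℝ≥0) : ReflTransGen (Lift r) {(p, M)} {(p, N)} :=
  h.lift (fun M => ({(p, M)} : MDist X)) fun M N hMN => by
    simpa only [MDist.scale_single] using of_step (hs M N hMN) p

theorem absorb {S : X → X → Prop}
    (hS : ∀ M N m, S M N → LiftTerm r N m → ∀ p, ∃ s,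
      ReflTransGen (Lift t) {(p, M)} s ∧ MDist.Rel S s (MDist.scale p m))
    {s n n' : MDist X} (h : Lift r n n') (hs : MDist.Rel S s n) :
    ∃ s', ReflTransGen (Lift t) s s' ∧ MDist.Rel S s' n' := by
  induction h generalizing s with
  | nil => exact ⟨s, .refl, hs⟩
  | cons hm _ ih =>
    obtain ⟨M, s₂, hM, hs₂, rfl⟩ := MDist.rel_cons_right.1 hs
    obtain ⟨s₁', hs₁, hrel₁⟩ := hS M _ _ hM hm _
    obtain ⟨s₂', hs₂, hrel₂⟩ := ih hs₂
    exact ⟨s₁' + s₂', star_add hs₁ hs₂, hrel₁.add hrel₂⟩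

theorem absorb_star {S : X → X → Prop}
    (hS : ∀ M N m, S M N → LiftTerm r N m → ∀ p, ∃ s,
      ReflTransGen (Lift t) {(p, M)} s ∧ MDist.Rel S s (MDist.scale p m))
    {s n n' : MDist X} (h : ReflTransGen (Lift r) n n') (hs : MDist.Rel S s n) :
    ∃ s', ReflTransGen (Lift t) s s' ∧ MDist.Rel S s' n' := by
  induction h with
  | refl => exact ⟨s, .refl, hs⟩
  | tail _ h ih =>
    obtain ⟨s₁, hs₁, hrel₁⟩ := ih
    obtain ⟨s₂, hs₂, hrel₂⟩ := h.absorb hS hrel₁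
    exact ⟨s₂, hs₁.trans hs₂, hrel₂⟩

theorem star_factor_of_rel {S : X → X → Prop}
    (hS : ∀ M N, S M N → ∀ p, ∃ s,
      ReflTransGen (Lift r) {(p, M)} s ∧ ReflTransGen (Lift t) s {(p, N)})
    {m n : MDist X} (h : MDist.Rel S m n) :
    ∃ s, ReflTransGen (Lift r) m s ∧ ReflTransGen (Lift t) s n := by
  induction n using Multiset.induction_on generalizing m with
  | empty => exact ⟨0, Multiset.rel_zero_right.1 h ▸ .refl, .refl⟩
  | cons x n ih =>
    obtain ⟨M, m', hM, hm', rfl⟩ := MDist.rel_cons_right.1 h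
    obtain ⟨s₁, hr₁, ht₁⟩ := hS M x.2 hM x.1
    obtain ⟨s₂, hr₂, ht₂⟩ := ih hm'
    exact ⟨s₁ + s₂, star_add hr₁ hr₂, Multiset.singleton_add x n ▸ star_add ht₁ ht₂⟩

end Lift

end Lifting

namespace Term

open Relation (ReflTransGen)

theorem lift_surfRed_star {M N : Term} (h : ReflTransGen SurfBetaStep M N) (p : ℝ≥0) :
    ReflTransGen (Lift surfRed) {(p, M)} {(p, N)} :=
  Lift.star_of_path (fun _ N h => .inl ⟨N, h, rfl⟩) h p

theorem lift_deepRed_star {M N : Term} (h : ReflTransGen DeepBetaStep M N) (p : ℝ≥0) :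
    ReflTransGen (Lift deepRed) {(p, M)} {(p, N)} :=
  Lift.star_of_path (fun _ _ h => h.deepRed) h p

theorem StandardReduces.absorb_liftTerm {M N : Term} {m : MDist Term} (h : StandardReduces M N)
    (hm : LiftTerm red N m) (p : ℝ≥0) : ∃ s, ReflTransGen (Lift surfRed) {(p, M)} s ∧
      MDist.Rel StandardReduces s (MDist.scale p m) := by
  obtain ⟨_, hMN⟩ := h
  rcases hm with rfl | ⟨N', hN', rfl⟩ | ⟨A, B, hAB, rfl⟩
  · exact ⟨_, .refl, MDist.scale_single p N ▸ .singleton ⟨_, hMN⟩ p⟩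
  · exact ⟨_, .refl, MDist.scale_single p N' ▸ .singleton (hMN.tail_betaStep hN') p⟩
  · obtain ⟨_, -, R, hMR, hRN⟩ := hMN.exists_internal
    obtain ⟨A₀, B₀, hR, hA, hB⟩ := hRN.plusStep hAB
    refine ⟨_, .tail (lift_surfRed_star hMR p) (.of_step (.inr ⟨A₀, B₀, hR, rfl⟩) p), ?_⟩
    simp only [MDist.scale_pair]
    exact (MDist.Rel.singleton hA _).add (.singleton hB _)

theorem StandardReduces.lift_surfRed_deepRed {M N : Term} (h : StandardReduces M N) (p : ℝ≥0) :
    ∃ s, ReflTransGen (Lift surfRed) {(p, M)} s ∧ ReflTransGen (Lift deepRed) s {(p, N)} := by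
  obtain ⟨_, h⟩ := h
  obtain ⟨R, hMR, hRN⟩ := h.exists_deepBetaStep_star
  exact ⟨_, lift_surfRed_star hMR p, lift_deepRed_star hRN p⟩

end Term

/-- Finitary Surface Standardization for `Λ⊕^cbv`: every finite reduction
sequence factors as surface steps followed by deep steps. -/
theorem finitary_surface_standardization :
    ∀ m n : MDist Term, Relation.ReflTransGen (Lift red) m n →
      ∃ r, Relation.ReflTransGen (Lift surfRed) m r ∧
        Relation.ReflTransGen (Lift deepRed) r n := by
  intro m n h
  obtain ⟨s, hms, hsn⟩ :=
    Lift.absorb_star (fun _ _ _ => StandardReduces.absorb_liftTerm) h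
      (.refl (fun M => ⟨0, Standard.refl M⟩) m)
  obtain ⟨r, hsr, hrn⟩ :=
    Lift.star_factor_of_rel (fun _ _ => StandardReduces.lift_surfRed_deepRed) hsn
  exact ⟨r, hms.trans hsr, hrn⟩
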